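/- arXiv:1804.09888 — 5 statements merged into one kernel-verified Lean document; each statement's English description precedes it below -/
import Mathlib

section
/- Let A, B, C be nonempty finite sets with |C| = |B|, let f : A × B → C, and let Good ⊆ A × B be such that for every a ∈ A and σ ∈ C there is at most one b ∈ B with (a, b) ∈ Good and f(a, b) = σ. If |Good| ≥ (1 − ε)·|A|·|B| for some ε ∈ [0, 1], then there exists σ ∈ C such that |{a ∈ A : ∃ b ∈ B, (a, b) ∈ Good ∧ f(a, b) = σ}| ≥ (1 − ε)·|A|. -/
/- Proposition 2 (abstract form): if at least a `(1 - ε)` fraction of the message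
realisations decode correctly, and for each source realisation `a` and broadcast value
`σ` at most one edge realisation `b` is good with `f (a, b) = σ`, then some broadcast
value `σ` is good for at least a `(1 - ε)` fraction of the source realisations. -/
open Classical in
theorem stmt1 {A B C : Type*} [Fintype A] [Fintype B] [Fintype C]
    [Nonempty A] [Nonempty B] [Nonempty C]
    (hcard : Fintype.card C = Fintype.card B)
    (f : A × B → C) (Good : Finset (A × B))
    (huniq : ∀ (a : A) (σ : C) (b b' : B), (a, b) ∈ Good → f (a, b) = σ →
      (a, b') ∈ Good → f (a, b') = σ → b = b')
    (ε : ℝ) (hε0 : 0 ≤ ε) (hε1 : ε ≤ 1)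
    (hGood : (1 - ε) * (Fintype.card A : ℝ) * (Fintype.card B : ℝ) ≤ (Good.card : ℝ)) :
    ∃ σ : C, (1 - ε) * (Fintype.card A : ℝ) ≤
      ((Finset.univ.filter (fun a : A => ∃ b : B, (a, b) ∈ Good ∧ f (a, b) = σ)).card : ℝ) := by
  have card_fiber_le (σ : C) : (Good.filter (fun p => f p = σ)).card ≤
      (Finset.univ.filter (fun a : A => ∃ b : B, (a, b) ∈ Good ∧ f (a, b) = σ)).card := by
    refine Finset.card_le_card_of_injOn Prod.fst ?_ ?_
    · rintro ⟨a, b⟩ h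
      rw [Finset.mem_coe, Finset.mem_filter] at h
      simpa using ⟨b, h⟩
    · rintro ⟨a, b⟩ h ⟨a', b'⟩ h' (rfl : a = a')
      rw [Finset.mem_coe, Finset.mem_filter] at h h'
      rw [huniq a σ b b' h.1 h.2 h'.1 h'.2]
  have card_good : (Good.card : ℝ) = ∑ σ : C, ((Good.filter (fun p => f p = σ)).card : ℝ) := by
    exact_mod_cast Finset.card_eq_sum_card_fiberwise (f := f) (t := Finset.univ) (by simp)
  obtain ⟨σ, -, hσ⟩ := Finset.exists_le_of_sum_le (s := (Finset.univ : Finset C))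
    (f := fun _ => (1 - ε) * (Fintype.card A : ℝ))
    (g := fun σ => ((Good.filter (fun p => f p = σ)).card : ℝ)) Finset.univ_nonempty (by
      rw [← card_good, Finset.sum_const, Finset.card_univ, hcard, nsmul_eq_mul, mul_comm]
      exact hGood)
  exact ⟨σ, hσ.trans (by exact_mod_cast card_fiber_le σ)⟩
end

section
/- Let A be a nonempty finite set, let ε' ∈ [0, 1), and let G ⊆ A be nonempty with |G| = (1 − ε')·|A|. Let U be uniformly distributed on A and let Û be uniformly distributed on G. Then for every function g from A to a finite set Y, H(g(U)) − H(g(Û)) ≤ ε'·log|A| − log(1 − ε'), where H denotes Shannon entropy with logarithms to base 2. -/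
/-- `nml2 x = -x * log₂ x`, the summand of base-2 Shannon entropy
(with the convention `0 · log 0 = 0`). -/
noncomputable def nml2 (x : ℝ) : ℝ := -x * Real.logb 2 x

open Classical in
/-- Base-2 Shannon entropy of the random variable `X` defined on the finite
probability space `Ω` with probability mass function `p`. -/
noncomputable def entropy {Ω S : Type*} [Fintype Ω] [Fintype S]
    (p : Ω → ℝ) (X : Ω → S) : ℝ :=
  ∑ s : S, nml2 (∑ ω : Ω, if X ω = s then p ω else 0)

/-- Conditional Shannon entropy `H(X | Y)` (base 2). -/
noncomputable def condEntropy {Ω S T : Type*} [Fintype Ω] [Fintype S] [Fintype T]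
    (p : Ω → ℝ) (X : Ω → S) (Y : Ω → T) : ℝ :=
  entropy p (fun ω => (X ω, Y ω)) - entropy p Y

/-- Mutual information `I(X; Y)` (base 2). -/
noncomputable def mutualInfo {Ω S T : Type*} [Fintype Ω] [Fintype S] [Fintype T]
    (p : Ω → ℝ) (X : Ω → S) (Y : Ω → T) : ℝ :=
  entropy p X + entropy p Y - entropy p (fun ω => (X ω, Y ω))

/-- Conditional mutual information `I(X; Y | Z)` (base 2). -/
noncomputable def condMutualInfo {Ω S T W : Type*} [Fintype Ω] [Fintype S] [Fintype T]
    [Fintype W] (p : Ω → ℝ) (X : Ω → S) (Y : Ω → T) (Z : Ω → W) : ℝ :=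
  entropy p (fun ω => (X ω, Z ω)) + entropy p (fun ω => (Y ω, Z ω))
    - entropy p (fun ω => ((X ω, Y ω), Z ω)) - entropy p Z

open Classical in
/-- Entropy of `g` under the uniform distribution on `G`, in terms of the fibre sizes of `g`. -/
theorem entropy_uniformOn_eq {A Y : Type*} [Fintype A] [Fintype Y] (G : Finset A)
    (hG : G.Nonempty) (g : A → Y) :
    entropy (fun a : A => if a ∈ G then (1 : ℝ) / (G.card : ℝ) else 0) g
      = Real.logb 2 G.card
        - (∑ y, ((G.filter (g · = y)).card : ℝ) * Real.logb 2 (G.filter (g · = y)).card)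
          / G.card := by
  have hm : (G.card : ℝ) ≠ 0 := by exact_mod_cast hG.card_pos.ne'
  have hsum : ∑ y, ((G.filter (g · = y)).card : ℝ) = G.card := by
    exact_mod_cast (Finset.card_eq_sum_card_fiberwise (f := g) (t := Finset.univ) (by simp)).symm
  have hfib (y : Y) : (∑ a : A, if g a = y then (if a ∈ G then (1 : ℝ) / G.card else 0) else 0)
      = (G.filter (g · = y)).card / G.card := by
    simp_rw [← ite_and, and_comm (a := g _ = y)]
    rw [← Finset.sum_filter, Finset.sum_const, Finset.filter_and, Finset.filter_univ_mem,
      Finset.inter_filter, Finset.inter_univ, nsmul_eq_mul, mul_one_div]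
  have hterm (y : Y) : nml2 ((G.filter (g · = y)).card / G.card)
      = (G.filter (g · = y)).card * (Real.logb 2 G.card / G.card)
        - (G.filter (g · = y)).card * Real.logb 2 (G.filter (g · = y)).card / G.card := by
    rcases eq_or_ne ((G.filter (g · = y)).card : ℝ) 0 with h | h
    · simp [h, nml2]
    · rw [nml2, Real.logb_div h hm]
      ring
  simp_rw [entropy, hfib, hterm]
  rw [Finset.sum_sub_distrib, ← Finset.sum_mul, hsum, Finset.sum_div, mul_div_cancel₀ _ hm]

theorem logb_two_natCast_mono {a b : ℕ} (h : a ≤ b) : Real.logb 2 a ≤ Real.logb 2 b := by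
  rcases Nat.eq_zero_or_pos a with rfl | ha
  · rcases Nat.eq_zero_or_pos b with rfl | hb
    · rfl
    · simpa using Real.logb_nonneg one_lt_two (by exact_mod_cast hb : (1 : ℝ) ≤ b)
  · exact Real.logb_le_logb_of_le one_lt_two (by exact_mod_cast ha) (by exact_mod_cast h)

theorem logb_two_natCast_nonneg (a : ℕ) : 0 ≤ Real.logb 2 a := by
  simpa using logb_two_natCast_mono a.zero_le

/- Proposition 3 (abstract form): with `U` uniform on `A` and `Û` uniform on a
subset `G` of relative size `1 - ε'`, for every `g : A → Y` we have
`H(g(U)) - H(g(Û)) ≤ ε'·log₂|A| - log₂(1 - ε')`. -/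
open Classical in
theorem stmt2 {A : Type*} [Fintype A] [Nonempty A]
    (ε' : ℝ) (hε0 : 0 ≤ ε') (hε1 : ε' < 1)
    (G : Finset A) (hGne : G.Nonempty)
    (hGcard : (G.card : ℝ) = (1 - ε') * (Fintype.card A : ℝ))
    {Y : Type*} [Fintype Y] (g : A → Y) :
    entropy (fun _ : A => (1 : ℝ) / (Fintype.card A : ℝ)) g
        - entropy (fun a : A => if a ∈ G then (1 : ℝ) / (G.card : ℝ) else 0) g
      ≤ ε' * Real.logb 2 (Fintype.card A : ℝ) - Real.logb 2 (1 - ε') := by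
  have hn : (0 : ℝ) < Fintype.card A := by exact_mod_cast Fintype.card_pos
  have hm : (0 : ℝ) < G.card := by exact_mod_cast hGne.card_pos
  have hU := entropy_uniformOn_eq Finset.univ Finset.univ_nonempty g
  simp only [Finset.mem_univ, if_true, Finset.card_univ] at hU
  rw [hU, entropy_uniformOn_eq G hGne g]
  set S := ∑ y, ((Finset.univ.filter (g · = y)).card : ℝ)
    * Real.logb 2 (Finset.univ.filter (g · = y)).card
  set T := ∑ y, ((G.filter (g · = y)).card : ℝ) * Real.logb 2 (G.filter (g · = y)).card
  have hlog : Real.logb 2 G.card = Real.logb 2 (1 - ε') + Real.logb 2 (Fintype.card A) := by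
    rw [hGcard, Real.logb_mul (by linarith) hn.ne']
  have hTS : T ≤ S := by
    refine Finset.sum_le_sum fun y _ => ?_
    have h : (G.filter (g · = y)).card ≤ (Finset.univ.filter (g · = y)).card :=
      Finset.card_le_card (Finset.filter_subset_filter _ G.subset_univ)
    exact mul_le_mul (by exact_mod_cast h) (logb_two_natCast_mono h)
      (logb_two_natCast_nonneg _) (Nat.cast_nonneg _)
  have hT : T ≤ G.card * Real.logb 2 (Fintype.card A) := by
    have hsum : ∑ y, ((G.filter (g · = y)).card : ℝ) = G.card := by
      exact_mod_cast
        (Finset.card_eq_sum_card_fiberwise (f := g) (t := Finset.univ) (by simp)).symm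
    rw [← hsum, Finset.sum_mul]
    exact Finset.sum_le_sum fun y _ => mul_le_mul_of_nonneg_left
      (logb_two_natCast_mono (Finset.card_le_univ _)) (Nat.cast_nonneg _)
  have hT' : T / G.card ≤ Real.logb 2 (Fintype.card A) := by
    rwa [div_le_iff₀' hm]
  have hS : T / G.card * (1 - ε') ≤ S / Fintype.card A := by
    have h : T / G.card * (1 - ε') = T / Fintype.card A := by
      have hε : 1 - ε' ≠ 0 := by linarith
      rw [hGcard]
      field_simp
    rw [h]
    gcongr
  have := mul_le_mul_of_nonneg_left hT' hε0
  linarith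
end

section
/- Let A be a nonempty finite set, let ε' ∈ [0, 1), and let G ⊆ A be nonempty with |G| = (1 − ε')·|A|. Let U be uniformly distributed on A and let Û be uniformly distributed on G. Then for every function g from A to a finite set Y and every function h from A to a finite set T, H(g(Û) | h(Û)) − H(g(U) | h(U)) ≤ (ε'/(1 − ε'))·(log e + log|Y|), where H(·|·) denotes conditional Shannon entropy with logarithms to base 2. -/
open Finset

/-- Gibbs' inequality for unnormalised weights, in the form of a bound on the
entropy defect `∑ nml2 (q y) - nml2 (∑ q y)`. -/
theorem sum_nml2_sub_nml2_sum_le {Y : Type*} [Fintype Y] (q r : Y → ℝ)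
    (hq : ∀ y, 0 ≤ q y) (hr : ∀ y, 0 ≤ r y) (hqr : ∀ y, 0 < q y → 0 < r y) :
    (∑ y, nml2 (q y)) - nml2 (∑ y, q y) ≤
      ∑ y, q y * (Real.logb 2 (∑ z, r z) - Real.logb 2 (r y)) := by
  set Q := ∑ y, q y with hQ
  set R := ∑ y, r y with hR
  have hlog : 0 < Real.log 2 := Real.log_pos one_lt_two
  have hQ0 : 0 ≤ Q := sum_nonneg fun y _ => hq y
  have hR0 : 0 ≤ R := sum_nonneg fun y _ => hr y
  have term : ∀ y, nml2 (q y) + q y * Real.logb 2 Q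
      - q y * (Real.logb 2 R - Real.logb 2 (r y)) ≤ (Q * r y / R - q y) / Real.log 2 := by
    intro y
    rcases (hq y).eq_or_lt with h0 | hpos
    · have : 0 ≤ Q * r y / R := div_nonneg (mul_nonneg hQ0 (hr y)) hR0
      simpa [← h0, nml2] using div_nonneg this hlog.le
    · have hry := hqr y hpos
      have hQpos : 0 < Q := hpos.trans_le (single_le_sum (fun z _ => hq z) (mem_univ y))
      have hRpos : 0 < R := hry.trans_le (single_le_sum (fun z _ => hr z) (mem_univ y))
      have key := Real.log_le_sub_one_of_pos
        (show 0 < Q * r y / (q y * R) by positivity)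
      rw [Real.log_div (by positivity) (by positivity), Real.log_mul hQpos.ne' hry.ne',
        Real.log_mul hpos.ne' hRpos.ne'] at key
      have key' := mul_le_mul_of_nonneg_left key hpos.le
      have e : q y * (Q * r y / (q y * R) - 1) = Q * r y / R - q y := by
        field_simp
      rw [e] at key'
      calc _ = q y * (Real.log Q + Real.log (r y) - (Real.log (q y) + Real.log R))
              / Real.log 2 := by
            simp only [nml2, Real.logb]
            ring
        _ ≤ _ := by gcongr
  have hsum := sum_le_sum fun y (_ : y ∈ univ) => term y
  have hle : ∑ y, (Q * r y / R - q y) / Real.log 2 ≤ 0 := by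
    rw [← sum_div, sum_sub_distrib, ← sum_div, ← mul_sum, ← hR, ← hQ]
    refine div_nonpos_of_nonpos_of_nonneg (sub_nonpos.2 ?_) hlog.le
    exact div_le_of_le_mul₀ hR0 hQ0 le_rfl
  rw [sum_sub_distrib, sum_add_distrib, ← sum_mul, ← hQ] at hsum
  have hn : nml2 Q = -(Q * Real.logb 2 Q) := by simp [nml2]
  linarith

open Classical in
theorem condEntropy_eq_sum {Ω S T : Type*} [Fintype Ω] [Fintype S] [Fintype T]
    (p : Ω → ℝ) (X : Ω → S) (Y : Ω → T) :
    condEntropy p X Y = ∑ t, ((∑ s, nml2 (∑ ω, if (X ω, Y ω) = (s, t) then p ω else 0))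
      - nml2 (∑ s, ∑ ω, if (X ω, Y ω) = (s, t) then p ω else 0)) := by
  unfold condEntropy entropy
  rw [sum_sub_distrib, Fintype.sum_prod_type_right]
  refine congrArg₂ _ (by congr!) (sum_congr rfl fun t _ => congrArg nml2 ?_)
  rw [sum_comm]
  refine sum_congr rfl fun ω _ => ?_
  by_cases hY : Y ω = t <;> simp [hY]

/-- Conditional entropy, extended to unnormalised weights, is monotone up to scaling. -/
theorem condEntropy_le_mul {Ω S T : Type*} [Fintype Ω] [Fintype S] [Fintype T]
    (p p' : Ω → ℝ) (c : ℝ) (hp : ∀ ω, 0 ≤ p ω) (hp' : ∀ ω, 0 ≤ p' ω)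
    (hle : ∀ ω, p ω ≤ c * p' ω) (X : Ω → S) (Y : Ω → T) :
    condEntropy p X Y ≤ c * condEntropy p' X Y := by
  classical
  rw [condEntropy_eq_sum, condEntropy_eq_sum, mul_sum]
  refine sum_le_sum fun t _ => ?_
  set q : S → ℝ := fun s => ∑ ω, if (X ω, Y ω) = (s, t) then p ω else 0 with hq
  set r : S → ℝ := fun s => ∑ ω, if (X ω, Y ω) = (s, t) then p' ω else 0 with hr
  have hq0 : ∀ s, 0 ≤ q s := fun s => sum_nonneg fun ω _ => by
    split_ifs
    exacts [hp ω, le_rfl]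
  have hr0 : ∀ s, 0 ≤ r s := fun s => sum_nonneg fun ω _ => by
    split_ifs
    exacts [hp' ω, le_rfl]
  have hqr : ∀ s, q s ≤ c * r s := fun s => by
    simp only [hq, hr, mul_sum]
    refine sum_le_sum fun ω _ => ?_
    split_ifs
    exacts [hle ω, (mul_zero c).ge]
  have hpos : ∀ s, 0 < q s → 0 < r s := fun s hs => (hr0 s).lt_of_ne fun h0 => by
    have := hqr s
    rw [← h0, mul_zero] at this
    exact this.not_gt hs
  refine (sum_nml2_sub_nml2_sum_le q r hq0 hr0 hpos).trans ?_
  have expand : (∑ s, nml2 (r s)) - nml2 (∑ s, r s) =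
      ∑ s, r s * (Real.logb 2 (∑ z, r z) - Real.logb 2 (r s)) := by
    simp only [nml2, mul_sub, sum_sub_distrib, neg_mul, sum_neg_distrib, ← sum_mul]
    ring
  rw [expand, mul_sum]
  refine sum_le_sum fun s _ => ?_
  rw [← mul_assoc]
  rcases (hr0 s).eq_or_lt with h0 | hs
  · have : q s = 0 := le_antisymm (by simpa [← h0] using hqr s) (hq0 s)
    simp [this, ← h0]
  · refine mul_le_mul_of_nonneg_right (hqr s) (sub_nonneg.2 ?_)
    exact Real.logb_le_logb_of_le one_lt_two hs
      (single_le_sum (fun z _ => hr0 z) (mem_univ s))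

theorem condEntropy_le_sum_mul_logb_card {Ω S T : Type*} [Fintype Ω] [Fintype S] [Fintype T]
    (p : Ω → ℝ) (hp : ∀ ω, 0 ≤ p ω) (X : Ω → S) (Y : Ω → T) :
    condEntropy p X Y ≤ (∑ ω, p ω) * Real.logb 2 (Fintype.card S) := by
  classical
  have htotal : ∑ t, ∑ s, (∑ ω, if (X ω, Y ω) = (s, t) then p ω else 0) = ∑ ω, p ω := by
    rw [← Fintype.sum_prod_type_right
      (fun st : S × T => ∑ ω, if (X ω, Y ω) = st then p ω else 0), sum_comm]
    simp
  rw [condEntropy_eq_sum, ← htotal, sum_mul]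
  refine sum_le_sum fun t _ => ?_
  refine (sum_nml2_sub_nml2_sum_le _ (fun _ => 1) (fun s => sum_nonneg fun ω _ => ?_)
    (fun _ => zero_le_one) (fun _ _ => one_pos)).trans_eq ?_
  · split_ifs
    exacts [hp ω, le_rfl]
  · simp [sum_mul]

/- Proposition 4 (abstract form): with `U` uniform on `A` and `Û` uniform on a
subset `G` of relative size `1 - ε'`, for all `g : A → Y` and `h : A → T` we have
`H(g(Û) | h(Û)) - H(g(U) | h(U)) ≤ (ε'/(1-ε'))·(log₂ e + log₂|Y|)`. -/
open Classical in
theorem stmt3 {A : Type*} [Fintype A] [Nonempty A]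
    (ε' : ℝ) (hε0 : 0 ≤ ε') (hε1 : ε' < 1)
    (G : Finset A) (hGne : G.Nonempty)
    (hGcard : (G.card : ℝ) = (1 - ε') * (Fintype.card A : ℝ))
    {Y T : Type*} [Fintype Y] [Fintype T] (g : A → Y) (h : A → T) :
    condEntropy (fun a : A => if a ∈ G then (1 : ℝ) / (G.card : ℝ) else 0) g h
        - condEntropy (fun _ : A => (1 : ℝ) / (Fintype.card A : ℝ)) g h
      ≤ (ε' / (1 - ε')) *
          (Real.logb 2 (Real.exp 1) + Real.logb 2 (Fintype.card Y : ℝ)) := by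
  have hc : 0 < 1 - ε' := sub_pos.2 hε1
  have hA : (0 : ℝ) < Fintype.card A := by exact_mod_cast Fintype.card_pos
  have hmono := condEntropy_le_mul
    (fun a : A => if a ∈ G then (1 : ℝ) / (G.card : ℝ) else 0)
    (fun _ : A => (1 : ℝ) / (Fintype.card A : ℝ)) (1 / (1 - ε'))
    (fun a => by positivity) (fun a => by positivity)
    (fun a => by
      rw [hGcard, div_mul_div_comm, one_mul]
      split_ifs
      exacts [le_rfl, by positivity]) g h
  have hcard := condEntropy_le_sum_mul_logb_card
    (fun _ : A => (1 : ℝ) / (Fintype.card A : ℝ)) (fun a => by positivity) g h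
  have hone : ∑ _a : A, (1 : ℝ) / (Fintype.card A : ℝ) = 1 := by
    simp [hA.ne']
  rw [hone, one_mul] at hcard
  have hexp : 0 ≤ Real.logb 2 (Real.exp 1) :=
    Real.logb_nonneg one_lt_two (Real.one_le_exp zero_le_one)
  have hscale : 1 / (1 - ε') = 1 + ε' / (1 - ε') := by
    field_simp
    ring
  rw [hscale, add_mul, one_mul] at hmono
  calc _ ≤ ε' / (1 - ε') * condEntropy (fun _ : A => (1 : ℝ) / (Fintype.card A : ℝ)) g h := by
        linarith
    _ ≤ _ := mul_le_mul_of_nonneg_left (by linarith) (by positivity)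
end

section
/- Let A be a nonempty finite set, let ε' ∈ [0, 1), and let G ⊆ A be nonempty with |G| = (1 − ε')·|A|. Let U be uniformly distributed on A and let Û be uniformly distributed on G. Then for every function g from A to a finite set Y and every function h from A to a finite set T, I(h(U); g(U)) ≤ I(h(Û); g(Û)) + ε'·log|A| − log(1 − ε') + (ε'/(1 − ε'))·(log e + log|Y|), where I denotes mutual information with logarithms to base 2. -/
open Real in
/-- The log-sum inequality. -/
theorem log_sum_inequality {ι : Type*} (s : Finset ι) (a b : ι → ℝ)
    (ha : ∀ i, 0 ≤ a i) (hb : ∀ i, 0 ≤ b i) (hab : ∀ i, b i = 0 → a i = 0) :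
    (∑ i ∈ s, a i) * (log (∑ i ∈ s, a i) - log (∑ i ∈ s, b i))
      ≤ ∑ i ∈ s, a i * (log (a i) - log (b i)) := by
  rcases (Finset.sum_nonneg fun i (_ : i ∈ s) => ha i).eq_or_lt with hA | hA
  · have h0 := (Finset.sum_eq_zero_iff_of_nonneg fun i (_ : i ∈ s) => ha i).1 hA.symm
    rw [← hA, zero_mul]
    exact (Finset.sum_eq_zero fun i hi => by rw [h0 i hi, zero_mul]).ge
  have hB : 0 < ∑ i ∈ s, b i := by
    refine (Finset.sum_nonneg fun i _ => hb i).lt_of_ne fun h => hA.ne' ?_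
    have h0 := (Finset.sum_eq_zero_iff_of_nonneg fun i (_ : i ∈ s) => hb i).1 h.symm
    exact Finset.sum_eq_zero fun i hi => hab i (h0 i hi)
  set A := ∑ i ∈ s, a i with hAdef
  set B := ∑ i ∈ s, b i with hBdef
  have key : ∀ i ∈ s, a i * (log A - log B) + (a i - b i * (A / B))
      ≤ a i * (log (a i) - log (b i)) := by
    intro i _
    rcases (ha i).eq_or_lt with h | h
    · rw [← h]
      have := mul_nonneg (hb i) (div_pos hA hB).le
      linarith
    · have hbi : 0 < b i := (hb i).lt_of_ne fun h' => h.ne' (hab i h'.symm)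
      have h1 := log_le_sub_one_of_pos (show 0 < b i * (A / B) / a i by positivity)
      rw [log_div (by positivity) h.ne', log_mul hbi.ne' (by positivity),
        log_div hA.ne' hB.ne'] at h1
      have h2 := mul_le_mul_of_nonneg_left h1 h.le
      have h3 : a i * (b i * (A / B) / a i - 1) = b i * (A / B) - a i := by
        field_simp
      linarith
  have hsum := Finset.sum_le_sum key
  rw [Finset.sum_add_distrib, Finset.sum_sub_distrib, ← Finset.sum_mul, ← Finset.sum_mul,
    ← hAdef, ← hBdef, mul_div_cancel₀ A hB.ne', sub_self, add_zero] at hsum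
  exact hsum

open Real in
/-- The mutual information, in nats, of a matrix of nonnegative weights; the total weight
need not be one. -/
noncomputable def weightInfo {S T : Type*} [Fintype S] [Fintype T] (w : S → T → ℝ) : ℝ :=
  ∑ s, ∑ t, w s t * (log (w s t) - log (∑ t', w s t') - log (∑ s', w s' t))

section WeightInfo

variable {S T : Type*} [Fintype S] [Fintype T]

open Real

theorem weightInfo_eq (w : S → T → ℝ) :
    weightInfo w = ∑ s, ∑ t, w s t * log (w s t)
      - ∑ s, (∑ t, w s t) * log (∑ t, w s t) - ∑ t, (∑ s, w s t) * log (∑ s, w s t) := by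
  have h : ∑ t, (∑ s, w s t) * log (∑ s, w s t)
      = ∑ s, ∑ t, w s t * log (∑ s', w s' t) := by
    rw [Finset.sum_comm]
    simp only [Finset.sum_mul]
  rw [h]
  simp only [weightInfo, mul_sub, Finset.sum_sub_distrib, Finset.sum_mul]

theorem mul_log_add_mul_log_le {x y : ℝ} (hx : 0 ≤ x) (hy : 0 ≤ y) :
    x * log x + y * log y ≤ (x + y) * log (x + y) := by
  rcases hx.eq_or_lt with rfl | hx
  · simp
  rcases hy.eq_or_lt with rfl | hy
  · simp
  have h1 := mul_le_mul_of_nonneg_left (log_le_log hx (by linarith : x ≤ x + y)) hx.le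
  have h2 := mul_le_mul_of_nonneg_left (log_le_log hy (by linarith : y ≤ x + y)) hy.le
  linarith

theorem weightInfo_add_le (u v : S → T → ℝ) (hu : ∀ s t, 0 ≤ u s t) (hv : ∀ s t, 0 ≤ v s t) :
    weightInfo (fun s t => u s t + v s t) ≤ weightInfo u + weightInfo v := by
  have hrow : ∑ s, (∑ t, u s t) * log (∑ t, u s t) + ∑ s, (∑ t, v s t) * log (∑ t, v s t)
      ≤ ∑ s, (∑ t, (u s t + v s t)) * log (∑ t, (u s t + v s t)) := by
    rw [← Finset.sum_add_distrib]
    refine Finset.sum_le_sum fun s _ => ?_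
    rw [Finset.sum_add_distrib]
    exact mul_log_add_mul_log_le (Finset.sum_nonneg fun t _ => hu s t)
      (Finset.sum_nonneg fun t _ => hv s t)
  have hcol : ∑ t, ((∑ s, (u s t + v s t) * log (u s t + v s t))
        - (∑ s, (u s t + v s t)) * log (∑ s, (u s t + v s t)))
      ≤ ∑ t, (((∑ s, u s t * log (u s t)) - (∑ s, u s t) * log (∑ s, u s t))
        + ((∑ s, v s t * log (v s t)) - (∑ s, v s t) * log (∑ s, v s t))) := by
    refine Finset.sum_le_sum fun t _ => ?_
    have h1 := log_sum_inequality Finset.univ (fun s => u s t) (fun s => u s t + v s t)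
      (fun s => hu s t) (fun s => add_nonneg (hu s t) (hv s t))
      (fun s h => by linarith [hu s t, hv s t])
    have h2 := log_sum_inequality Finset.univ (fun s => v s t) (fun s => u s t + v s t)
      (fun s => hv s t) (fun s => add_nonneg (hu s t) (hv s t))
      (fun s h => by linarith [hu s t, hv s t])
    simp only [mul_sub, Finset.sum_sub_distrib] at h1 h2
    have h3 : ∑ s, (u s t + v s t) * log (u s t + v s t)
        = ∑ s, u s t * log (u s t + v s t) + ∑ s, v s t * log (u s t + v s t) := by
      rw [← Finset.sum_add_distrib]
      simp only [add_mul]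
    have h4 : (∑ s, (u s t + v s t)) * log (∑ s, (u s t + v s t))
        = (∑ s, u s t) * log (∑ s, (u s t + v s t))
          + (∑ s, v s t) * log (∑ s, (u s t + v s t)) := by
      rw [← add_mul, ← Finset.sum_add_distrib]
    linarith
  simp only [Finset.sum_add_distrib (f := fun t => (∑ s, u s t * log (u s t)) - _),
    Finset.sum_sub_distrib] at hcol
  rw [weightInfo_eq, weightInfo_eq, weightInfo_eq,
    Finset.sum_comm (f := fun s t => (u s t + v s t) * log (u s t + v s t)),
    Finset.sum_comm (f := fun s t => u s t * log (u s t)),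
    Finset.sum_comm (f := fun s t => v s t * log (v s t))]
  linarith

theorem weightInfo_const_mul {c : ℝ} (hc : 0 < c) (w : S → T → ℝ) (hw : ∀ s t, 0 ≤ w s t) :
    weightInfo (fun s t => c * w s t) = c * weightInfo w - c * log c * ∑ s, ∑ t, w s t := by
  simp only [weightInfo, Finset.mul_sum, ← Finset.sum_sub_distrib]
  refine Finset.sum_congr rfl fun s _ => Finset.sum_congr rfl fun t _ => ?_
  simp only [← Finset.mul_sum]
  rcases (hw s t).eq_or_lt with h | h
  · simp [← h]
  have h1 : 0 < ∑ t', w s t' :=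
    h.trans_le (Finset.single_le_sum (fun t' _ => hw s t') (Finset.mem_univ t))
  have h2 : 0 < ∑ s', w s' t :=
    h.trans_le (Finset.single_le_sum (f := fun s' => w s' t) (fun s' _ => hw s' t)
      (Finset.mem_univ s))
  rw [log_mul hc.ne' h.ne', log_mul hc.ne' h1.ne', log_mul hc.ne' h2.ne']
  ring

theorem weightInfo_le_of_forall_le {c : ℝ} (hc : 0 < c) (w : S → T → ℝ)
    (hw : ∀ s t, w s t = 0 ∨ c ≤ w s t) :
    weightInfo w ≤ -log c * ∑ s, ∑ t, w s t := by
  have hw0 : ∀ s t, 0 ≤ w s t := fun s t => (hw s t).elim (fun h => h.ge) hc.le.trans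
  simp only [weightInfo, Finset.mul_sum]
  refine Finset.sum_le_sum fun s _ => Finset.sum_le_sum fun t _ => ?_
  rcases hw s t with h | h
  · simp [h]
  have hpos := hc.trans_le h
  have h1 := log_le_log hpos
    (Finset.single_le_sum (fun t' _ => hw0 s t') (Finset.mem_univ t))
  have h2 := log_le_log hc (h.trans
    (Finset.single_le_sum (f := fun s' => w s' t) (fun s' _ => hw0 s' t) (Finset.mem_univ s)))
  rw [mul_comm (-log c)]
  exact mul_le_mul_of_nonneg_left (by linarith) hpos.le

theorem weightInfo_nonneg (w : S → T → ℝ) (hw : ∀ s t, 0 ≤ w s t)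
    (hw1 : ∑ s, ∑ t, w s t = 1) : 0 ≤ weightInfo w := by
  have hr : ∀ s t, w s t ≤ ∑ t', w s t' := fun s t =>
    Finset.single_le_sum (fun t' _ => hw s t') (Finset.mem_univ t)
  have hl : ∀ s t, w s t ≤ ∑ s', w s' t := fun s t =>
    Finset.single_le_sum (f := fun s' => w s' t) (fun s' _ => hw s' t) (Finset.mem_univ s)
  have hr0 : ∀ s, 0 ≤ ∑ t, w s t := fun s => Finset.sum_nonneg fun t _ => hw s t
  have hl0 : ∀ t, 0 ≤ ∑ s, w s t := fun t => Finset.sum_nonneg fun s _ => hw s t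
  have h := log_sum_inequality Finset.univ (fun x : S × T => w x.1 x.2)
    (fun x => (∑ t, w x.1 t) * ∑ s, w s x.2) (fun x => hw _ _)
    (fun x => mul_nonneg (hr0 _) (hl0 _)) (fun x hx => by
      rcases mul_eq_zero.1 hx with h | h
      · exact le_antisymm (h ▸ hr _ _) (hw _ _)
      · exact le_antisymm (h ▸ hl _ _) (hw _ _))
  have hprod : ∑ s, ∑ t, (∑ t', w s t') * ∑ s', w s' t = 1 := by
    rw [← Finset.sum_mul_sum, hw1, Finset.sum_comm, hw1, one_mul]
  simp only [Fintype.sum_prod_type, hw1, hprod, log_one, sub_self, mul_zero] at h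
  refine h.trans_eq (Finset.sum_congr rfl fun s _ => Finset.sum_congr rfl fun t _ => ?_)
  rcases (hw s t).eq_or_lt with h0 | h0
  · simp [← h0]
  rw [log_mul (h0.trans_le (hr s t)).ne' (h0.trans_le (hl s t)).ne', sub_sub]

end WeightInfo

open Classical in
/-- The total weight under `p` of the fibre of `X` over `s`. -/
noncomputable def pushWeight {Ω S : Type*} [Fintype Ω] (p : Ω → ℝ) (X : Ω → S) (s : S) : ℝ :=
  ∑ ω, if X ω = s then p ω else 0

/-- The joint weights of the pair `(X, Y)` under the weight function `p`. -/
noncomputable def jointWeight {Ω S T : Type*} [Fintype Ω] (p : Ω → ℝ) (X : Ω → S) (Y : Ω → T)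
    (s : S) (t : T) : ℝ :=
  pushWeight p (fun ω => (X ω, Y ω)) (s, t)

section JointWeight

variable {Ω S T : Type*} [Fintype Ω]

theorem jointWeight_nonneg {p : Ω → ℝ} (hp : ∀ ω, 0 ≤ p ω) (X : Ω → S) (Y : Ω → T)
    (s : S) (t : T) : 0 ≤ jointWeight p X Y s t :=
  Finset.sum_nonneg fun ω _ => by
    split_ifs
    exacts [hp ω, le_rfl]

open Classical in
theorem sum_jointWeight_right [Fintype T] (p : Ω → ℝ) (X : Ω → S) (Y : Ω → T) (s : S) :
    ∑ t, jointWeight p X Y s t = ∑ ω, if X ω = s then p ω else 0 := by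
  simp only [jointWeight, pushWeight]
  rw [Finset.sum_comm]
  refine Finset.sum_congr rfl fun ω _ => ?_
  by_cases h : X ω = s <;> simp [h]

open Classical in
theorem sum_jointWeight_left [Fintype S] (p : Ω → ℝ) (X : Ω → S) (Y : Ω → T) (t : T) :
    ∑ s, jointWeight p X Y s t = ∑ ω, if Y ω = t then p ω else 0 := by
  simp only [jointWeight, pushWeight]
  rw [Finset.sum_comm]
  refine Finset.sum_congr rfl fun ω _ => ?_
  by_cases h : Y ω = t <;> simp [h]

theorem sum_sum_jointWeight [Fintype S] [Fintype T] (p : Ω → ℝ) (X : Ω → S) (Y : Ω → T) :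
    ∑ s, ∑ t, jointWeight p X Y s t = ∑ ω, p ω := by
  classical
  simp only [sum_jointWeight_right]
  rw [Finset.sum_comm]
  simp

theorem mutualInfo_eq_weightInfo_div [Fintype S] [Fintype T] (p : Ω → ℝ) (X : Ω → S)
    (Y : Ω → T) :
    mutualInfo p X Y = weightInfo (jointWeight p X Y) / Real.log 2 := by
  have hn : ∀ x, nml2 x = -(x * Real.log x / Real.log 2) := fun x => by
    rw [nml2, Real.logb]
    ring
  simp only [weightInfo_eq, sum_jointWeight_right, sum_jointWeight_left, mutualInfo, entropy, hn,
    Fintype.sum_prod_type, Finset.sum_neg_distrib, ← Finset.sum_div]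
  simp only [jointWeight, pushWeight]
  ring

theorem jointWeight_eq_zero_or_le {p : Ω → ℝ} {c : ℝ} (hc : 0 ≤ c)
    (hp : ∀ ω, p ω = 0 ∨ c ≤ p ω) (X : Ω → S) (Y : Ω → T) (s : S) (t : T) :
    jointWeight p X Y s t = 0 ∨ c ≤ jointWeight p X Y s t := by
  refine or_iff_not_imp_left.2 fun h => ?_
  obtain ⟨ω, hω, hne⟩ := Finset.exists_ne_zero_of_sum_ne_zero h
  have hXY : (X ω, Y ω) = (s, t) := by
    by_contra h'
    exact hne (if_neg h')
  rw [if_pos hXY] at hne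
  rw [jointWeight, pushWeight]
  refine le_trans ?_ (Finset.single_le_sum (fun ω' _ => ?_) hω)
  · rw [if_pos hXY]
    exact (hp ω).resolve_left hne
  split_ifs
  exacts [(hp ω').elim (fun h => h.ge) hc.trans, le_rfl]

theorem jointWeight_mul_add (c : ℝ) (p q : Ω → ℝ) (X : Ω → S) (Y : Ω → T) :
    jointWeight (fun ω => c * p ω + q ω) X Y
      = fun s t => c * jointWeight p X Y s t + jointWeight q X Y s t := by
  funext s t
  simp only [jointWeight, pushWeight, Finset.mul_sum, ← Finset.sum_add_distrib]
  refine Finset.sum_congr rfl fun ω _ => ?_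
  split_ifs <;> simp

end JointWeight

/- Lemma 1 (abstract form): with `U` uniform on `A` and `Û` uniform on a subset `G`
of relative size `1 - ε'`, for all `g : A → Y` and `h : A → T`,
`I(h(U); g(U)) ≤ I(h(Û); g(Û)) + ε'·log₂|A| - log₂(1-ε') + (ε'/(1-ε'))·(log₂ e + log₂|Y|)`. -/
open Classical in
theorem stmt4 {A : Type*} [Fintype A] [Nonempty A]
    (ε' : ℝ) (hε0 : 0 ≤ ε') (hε1 : ε' < 1)
    (G : Finset A) (hGne : G.Nonempty)
    (hGcard : (G.card : ℝ) = (1 - ε') * (Fintype.card A : ℝ))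
    {Y T : Type*} [Fintype Y] [Fintype T] (g : A → Y) (h : A → T) :
    mutualInfo (fun _ : A => (1 : ℝ) / (Fintype.card A : ℝ)) h g
      ≤ mutualInfo (fun a : A => if a ∈ G then (1 : ℝ) / (G.card : ℝ) else 0) h g
          + ε' * Real.logb 2 (Fintype.card A : ℝ) - Real.logb 2 (1 - ε')
          + (ε' / (1 - ε')) *
              (Real.logb 2 (Real.exp 1) + Real.logb 2 (Fintype.card Y : ℝ)) := by
  have hA : (0 : ℝ) < Fintype.card A := by exact_mod_cast Fintype.card_pos
  have hG : (0 : ℝ) < G.card := by exact_mod_cast hGne.card_pos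
  have hε : 0 < 1 - ε' := by linarith
  have hY : (1 : ℝ) ≤ Fintype.card Y := by
    have : Nonempty Y := ‹Nonempty A›.map g
    exact_mod_cast Fintype.card_pos (α := Y)
  have hlog2 : 0 < Real.log 2 := Real.log_pos one_lt_two
  set p : A → ℝ := fun a => if a ∈ G then (1 : ℝ) / (G.card : ℝ) else 0 with hp
  set q : A → ℝ := fun a => if a ∈ G then 0 else (1 : ℝ) / (Fintype.card A : ℝ) with hq
  have hdecomp : (fun _ : A => (1 : ℝ) / (Fintype.card A : ℝ))
      = fun a => (1 - ε') * p a + q a := by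
    funext a
    by_cases ha : a ∈ G
    · simp only [hp, hq, if_pos ha, hGcard]
      field_simp
      ring
    · simp [hp, hq, ha]
  have hp0 : ∀ a, 0 ≤ p a := fun a => by
    simp only [hp]
    split_ifs <;> positivity
  have hq0 : ∀ a, q a = 0 ∨ 1 / (Fintype.card A : ℝ) ≤ q a := fun a => by
    by_cases ha : a ∈ G <;> simp [hq, ha]
  have hp1 : ∑ a, p a = 1 := by
    simp [hp, hG.ne']
  have hq1 : ∑ a, q a = ε' := by
    have hsum : ∑ _a : A, (1 : ℝ) / (Fintype.card A : ℝ) = ∑ a, ((1 - ε') * p a + q a) :=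
      Finset.sum_congr rfl fun a _ => congrFun hdecomp a
    rw [Finset.sum_add_distrib, ← Finset.mul_sum, hp1, Finset.sum_const, Finset.card_univ,
      nsmul_eq_mul, mul_one_div_cancel hA.ne'] at hsum
    linarith
  have hP0 := jointWeight_nonneg hp0 h g
  have hc : 0 < 1 / (Fintype.card A : ℝ) := by positivity
  have hQ := jointWeight_eq_zero_or_le hc.le hq0 h g
  have hQ0 : ∀ s t, 0 ≤ jointWeight q h g s t :=
    fun s t => (hQ s t).elim (fun h => h.ge) hc.le.trans
  have hadd := weightInfo_add_le (fun s t => (1 - ε') * jointWeight p h g s t)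
    (jointWeight q h g) (fun s t => mul_nonneg hε.le (hP0 s t)) hQ0
  have hbad := weightInfo_le_of_forall_le hc _ hQ
  have hnonneg := weightInfo_nonneg _ hP0 ((sum_sum_jointWeight p h g).trans hp1)
  rw [weightInfo_const_mul hε _ hP0, sum_sum_jointWeight, hp1] at hadd
  rw [sum_sum_jointWeight, hq1, one_div, Real.log_inv, neg_neg] at hbad
  have hlogε : Real.log (1 - ε') ≤ 0 := Real.log_nonpos hε.le (by linarith)
  have hmain : weightInfo (fun s t => (1 - ε') * jointWeight p h g s t + jointWeight q h g s t)
      ≤ weightInfo (jointWeight p h g) + ε' * Real.log (Fintype.card A)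
        - Real.log (1 - ε') := by
    nlinarith [mul_nonneg hε0 hnonneg, mul_nonneg hε0 (neg_nonneg.2 hlogε)]
  have hextra : 0 ≤ ε' / (1 - ε') *
      (Real.logb 2 (Real.exp 1) + Real.logb 2 (Fintype.card Y : ℝ)) :=
    mul_nonneg (div_nonneg hε0 hε.le) (add_nonneg
      (Real.logb_nonneg one_lt_two (Real.one_le_exp zero_le_one))
      (Real.logb_nonneg one_lt_two hY))
  rw [mutualInfo_eq_weightInfo_div, mutualInfo_eq_weightInfo_div, hdecomp, jointWeight_mul_add]
  have hdiv := div_le_div_of_nonneg_right hmain hlog2.le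
  rw [sub_div, add_div, mul_div_assoc] at hdiv
  simp only [Real.logb] at hextra ⊢
  linarith
end

section
/- Let X be a random variable taking values in a finite set, let E be a finite index set, and for each e ∈ E let m_e be a positive integer, let g_e be a function from the range of X to ZMod m_e, and let K_e be uniformly distributed on ZMod m_e, with the family (K_e)_{e ∈ E} mutually independent and independent of X. Define Y_e := K_e + g_e(X) (addition in ZMod m_e). Then for every function h of X and every subset B ⊆ E: H(h(X) | (Y_e)_{e ∈ E}, (K_e)_{e ∈ B}) = H(h(X) | (g_e(X))_{e ∈ B}), and consequently I(h(X); (Y_e)_{e ∈ E}, (K_e)_{e ∈ B}) = I(h(X); (g_e(X))_{e ∈ B}). -/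
theorem entropy_equiv_comp {Ω S S' : Type*} [Fintype Ω] [Fintype S] [Fintype S']
    (p : Ω → ℝ) (X : Ω → S) (σ : S ≃ S') :
    entropy p (fun ω => σ (X ω)) = entropy p X := by
  classical
  unfold entropy
  rw [← Equiv.sum_comp σ]
  exact Finset.sum_congr rfl fun s _ => congrArg nml2 <|
    Finset.sum_congr rfl fun ω _ => by
      simp only [σ.injective.eq_iff]

theorem nml2_div {x c : ℝ} (hc : c ≠ 0) :
    c * nml2 (x / c) = nml2 x + x * Real.logb 2 c := by
  unfold nml2
  rcases eq_or_ne x 0 with rfl | hx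
  · simp
  · rw [Real.logb_div hx hc]
    field_simp
    ring

open Classical in
theorem sum_mass_eq_sum {Ω S : Type*} [Fintype Ω] [Fintype S] (p : Ω → ℝ) (X : Ω → S) :
    ∑ s, ∑ ω, (if X ω = s then p ω else 0) = ∑ ω, p ω := by
  rw [Finset.sum_comm]
  simp

/-- Adjoining an independent uniform coordinate does not change the entropy of a function of the
original variable. -/
theorem entropy_comp_fst {A K S : Type*} [Fintype A] [Fintype K] [Nonempty K] [Fintype S]
    (p : A → ℝ) (V : A → S) :
    entropy (fun ω : A × K => p ω.1 / Fintype.card K) (fun ω => V ω.1) = entropy p V := by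
  classical
  have hK : (Fintype.card K : ℝ) ≠ 0 := by exact_mod_cast Fintype.card_ne_zero
  unfold entropy
  refine Finset.sum_congr rfl fun s _ => congrArg nml2 ?_
  rw [Fintype.sum_prod_type]
  refine Finset.sum_congr rfl fun a _ => ?_
  split_ifs
  · simp only [Finset.sum_const, Finset.card_univ, nsmul_eq_mul]
    field_simp
  · simp

/-- One-time pad: a uniform independent key shifted by a function of `a` is uniform and
independent of `a`, so it adds `log₂ |K|` to the entropy of any function of `a`. -/
theorem entropy_prod_add_key {A K S : Type*} [Fintype A] [Fintype K] [AddGroup K] [Fintype S]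
    (p : A → ℝ) (hp : ∑ a, p a = 1) (V : A → S) (f : A → K) :
    entropy (fun ω : A × K => p ω.1 / Fintype.card K) (fun ω => (V ω.1, ω.2 + f ω.1))
      = entropy p V + Real.logb 2 (Fintype.card K) := by
  classical
  have hK : (Fintype.card K : ℝ) ≠ 0 := by exact_mod_cast Fintype.card_ne_zero
  have mass (s : S) (y : K) :
      (∑ ω : A × K, if (V ω.1, ω.2 + f ω.1) = (s, y) then p ω.1 / Fintype.card K else 0)
        = (∑ a, if V a = s then p a else 0) / Fintype.card K := by
    rw [Fintype.sum_prod_type, Finset.sum_div]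
    refine Finset.sum_congr rfl fun a _ => ?_
    by_cases hs : V a = s
    · simp [hs, ← eq_sub_iff_add_eq]
    · simp [hs]
  calc entropy (fun ω : A × K => p ω.1 / Fintype.card K) (fun ω => (V ω.1, ω.2 + f ω.1))
      = ∑ s, ∑ _y : K, nml2 ((∑ a, if V a = s then p a else 0) / Fintype.card K) := by
        unfold entropy
        rw [Fintype.sum_prod_type]
        refine Finset.sum_congr rfl fun s _ => Finset.sum_congr rfl fun y _ => congrArg nml2 ?_
        rw [← mass s y]
        exact Finset.sum_congr rfl fun ω _ => by congr
    _ = ∑ s, (nml2 (∑ a, if V a = s then p a else 0)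
          + (∑ a, if V a = s then p a else 0) * Real.logb 2 (Fintype.card K)) := by
        simp only [Finset.sum_const, Finset.card_univ, nsmul_eq_mul, nml2_div hK]
    _ = entropy p V + Real.logb 2 (Fintype.card K) := by
        rw [Finset.sum_add_distrib, ← Finset.sum_mul, sum_mass_eq_sum, hp, one_mul]
        rfl

/-- The change of coordinates `(γ, y) ↦ (y, r y - γ)`. -/
def padEquiv {G K : Type*} [AddCommGroup G] (r : K → G) : G × K ≃ K × G where
  toFun v := (v.2, r v.2 - v.1)
  invFun w := (r w.1 - w.2, w.1)
  left_inv v := by simp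
  right_inv w := by simp

/- Security argument of Part 1 of Theorem 2: with `X ~ p` on `SX`, and keys
`K e` uniform on `ZMod (m e)`, mutually independent and independent of `X`
(realised by the product pmf `q` on `SX × Π e, ZMod (m e)`), setting
`Y e = K e + g e X`, for every `h` and every `B ⊆ E`:
`H(h(X) | (Y_e)_{e ∈ E}, (K_e)_{e ∈ B}) = H(h(X) | (g_e(X))_{e ∈ B})` and
`I(h(X); (Y_e)_{e ∈ E}, (K_e)_{e ∈ B}) = I(h(X); (g_e(X))_{e ∈ B})`. -/
theorem stmt5 {SX : Type*} [Fintype SX]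
    (p : SX → ℝ) (hp0 : ∀ x, 0 ≤ p x) (hp1 : ∑ x : SX, p x = 1)
    {E : Type*} [Fintype E] [DecidableEq E]
    (m : E → ℕ) [∀ e, NeZero (m e)] (hm : ∀ e, 0 < m e)
    (g : (e : E) → SX → ZMod (m e))
    {T : Type*} [Fintype T] (h : SX → T)
    (B : Finset E)
    (q : SX × ((e : E) → ZMod (m e)) → ℝ)
    (hq : q = fun ω => p ω.1 * ∏ e : E, ((1 : ℝ) / (m e : ℝ))) :
    condEntropy q (fun ω => h ω.1)
        (fun ω => ((fun e : E => ω.2 e + g e ω.1),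
          (fun e : {x // x ∈ B} => ω.2 e.1)))
      = condEntropy q (fun ω => h ω.1)
          (fun ω => (fun e : {x // x ∈ B} => g e.1 ω.1))
    ∧ mutualInfo q (fun ω => h ω.1)
        (fun ω => ((fun e : E => ω.2 e + g e ω.1),
          (fun e : {x // x ∈ B} => ω.2 e.1)))
      = mutualInfo q (fun ω => h ω.1)
          (fun ω => (fun e : {x // x ∈ B} => g e.1 ω.1)) := by
  have hq' : q = fun ω => p ω.1 / Fintype.card ((e : E) → ZMod (m e)) := by
    rw [hq]
    funext ω
    simp [Fintype.card_pi, ZMod.card, div_eq_mul_inv]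
  let r : ((e : E) → ZMod (m e)) → (e : {x // x ∈ B}) → ZMod (m e.1) := fun y e => y e.1
  let gB : SX → (e : {x // x ∈ B}) → ZMod (m e.1) := fun x e => g e.1 x
  let f : SX → (e : E) → ZMod (m e) := fun x e => g e x
  have hpad (ω : SX × ((e : E) → ZMod (m e))) :
      ((fun e : E => ω.2 e + g e ω.1), (fun e : {x // x ∈ B} => ω.2 e.1))
        = padEquiv r (gB ω.1, ω.2 + f ω.1) := by
    refine Prod.ext rfl ?_
    funext e
    simp [padEquiv, r, gB, f]
  have hView : entropy q (fun ω => ((fun e : E => ω.2 e + g e ω.1),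
        (fun e : {x // x ∈ B} => ω.2 e.1)))
      = entropy q (fun ω => gB ω.1)
        + Real.logb 2 (Fintype.card ((e : E) → ZMod (m e))) := by
    simp only [hpad]
    rw [entropy_equiv_comp q (fun ω => (gB ω.1, ω.2 + f ω.1)), hq',
      entropy_prod_add_key p hp1, entropy_comp_fst]
  have hJoint : entropy q (fun ω => (h ω.1, ((fun e : E => ω.2 e + g e ω.1),
        (fun e : {x // x ∈ B} => ω.2 e.1))))
      = entropy q (fun ω => (h ω.1, gB ω.1))
        + Real.logb 2 (Fintype.card ((e : E) → ZMod (m e))) := by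
    simp only [hpad]
    rw [show (fun ω : SX × ((e : E) → ZMod (m e)) =>
          (h ω.1, padEquiv r (gB ω.1, ω.2 + f ω.1)))
        = fun ω => ((Equiv.prodAssoc _ _ _).trans ((Equiv.refl T).prodCongr (padEquiv r)))
          ((h ω.1, gB ω.1), ω.2 + f ω.1) from rfl,
      entropy_equiv_comp q (fun ω => ((h ω.1, gB ω.1), ω.2 + f ω.1)), hq',
      entropy_prod_add_key p hp1 (fun x => (h x, gB x)),
      entropy_comp_fst p (fun x => (h x, gB x))]
  unfold condEntropy mutualInfo
  rw [hView, hJoint]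
  constructor <;> ring
end
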